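/- arXiv:2411.18381 — 6 statements merged into one kernel-verified Lean document; each statement's English description precedes it below -/
import Mathlib

section
/- In a two-machine blocking flow shop with fixed job sequence (with n ≥ 1 jobs and strictly positive processing times a j on M1 and b j on M2), the infimum of the makespan over all blocking-feasible schedules equals the infimum of the makespan over all no-wait blocking-feasible schedules, i.e., the optimal values of the blocking version and the no-wait version of the problem coincide. -/
/-- Blocking-feasible schedule for a two-machine blocking flow shop with fixed job
sequence: `s1 j` / `s2 j` are the start times of job `j` on machines `M1` / `M2`. -/
def BlockingFeasible (n : ℕ) (hn : 1 ≤ n) (a b s1 s2 : Fin n → ℝ) : Prop :=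
  0 ≤ s1 ⟨0, by omega⟩ ∧
  (∀ j : Fin n, s1 j + a j ≤ s2 j) ∧
  (∀ j : Fin n, (h : (j : ℕ) + 1 < n) → s2 j + b j ≤ s2 ⟨(j : ℕ) + 1, h⟩) ∧
  (∀ j : Fin n, (h : (j : ℕ) + 1 < n) → s2 j ≤ s1 ⟨(j : ℕ) + 1, h⟩)

/-- Makespan of a schedule: completion time of the last job on `M2`. -/
def makespan (n : ℕ) (hn : 1 ≤ n) (b s2 : Fin n → ℝ) : ℝ :=
  s2 ⟨n - 1, by omega⟩ + b ⟨n - 1, by omega⟩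

/-!
Starting each job on `M1` as late as its start on `M2` permits, at time `s2 j - a j`, removes all
waiting. It only increases `s1`, which preserves `0 ≤ s1 0` and the blocking constraints, and it
leaves the schedule on `M2`, hence the makespan, unchanged.
-/

namespace BlockingFeasible

variable {n : ℕ} {hn : 1 ≤ n} {a b s1 s1' s2 : Fin n → ℝ}

theorem mono_left (h : BlockingFeasible n hn a b s1 s2) (hle : s1 ≤ s1')
    (hfinish : ∀ j, s1' j + a j ≤ s2 j) : BlockingFeasible n hn a b s1' s2 := by
  obtain ⟨hstart, -, hM2, hblock⟩ := h
  exact ⟨hstart.trans (hle _), hfinish, hM2, fun j hj => (hblock j hj).trans (hle _)⟩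

theorem noWait (h : BlockingFeasible n hn a b s1 s2) :
    BlockingFeasible n hn a b (s2 - a) s2 :=
  h.mono_left (fun j => le_sub_iff_add_le.mpr (h.2.1 j)) fun j => (sub_add_cancel (s2 j) (a j)).le

end BlockingFeasible

theorem blocking_inf_eq_noWait_inf_general {α : Type*}
    (n : ℕ) (hn : 1 ≤ n) (a b : Fin n → ℝ) (f : (Fin n → ℝ) → α) :
    {C : α | ∃ s1 s2 : Fin n → ℝ, BlockingFeasible n hn a b s1 s2 ∧ f s2 = C} =
    {C : α | ∃ s1 s2 : Fin n → ℝ,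
        BlockingFeasible n hn a b s1 s2 ∧ (∀ j : Fin n, s2 j = s1 j + a j) ∧ f s2 = C} := by
  ext C
  constructor
  · rintro ⟨s1, s2, hfeas, hC⟩
    exact ⟨s2 - a, s2, hfeas.noWait, fun j => (sub_add_cancel (s2 j) (a j)).symm, hC⟩
  · rintro ⟨s1, s2, hfeas, -, hC⟩
    exact ⟨s1, s2, hfeas, hC⟩

/-- The optimal makespan of the blocking version equals the optimal makespan of
the no-wait version in a two-machine flow shop with fixed job sequence. -/
theorem blocking_inf_eq_noWait_inf
    (n : ℕ) (hn : 1 ≤ n) (a b : Fin n → ℝ)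
    (ha : ∀ j, 0 < a j) (hb : ∀ j, 0 < b j) :
    sInf {C : ℝ | ∃ s1 s2 : Fin n → ℝ,
        BlockingFeasible n hn a b s1 s2 ∧ makespan n hn b s2 = C} =
    sInf {C : ℝ | ∃ s1 s2 : Fin n → ℝ,
        BlockingFeasible n hn a b s1 s2 ∧ (∀ j : Fin n, s2 j = s1 j + a j) ∧
        makespan n hn b s2 = C} :=
  congrArg sInf (blocking_inf_eq_noWait_inf_general n hn a b (makespan n hn b))
end

section
/- In a two-machine blocking flow shop with fixed job sequence (with n ≥ 1 jobs and strictly positive processing times a j on M1 and b j on M2), the minimum makespan over all blocking-feasible schedules is attained and equals a 0 + (∑_{j=1}^{n−1} max(a j, b (j−1))) + b (n−1). -/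
/-!
Eliminating the `M1` start times by starting every job on `M1` as late as possible,
`s1 j = s2 j - a j`, turns feasibility into a chain of difference constraints on `s2` alone:
`a 0 ≤ s2 0` and `s2 i + max (a (i + 1)) (b i) ≤ s2 (i + 1)`. Such a chain has a pointwise least
solution, obtained by making every constraint tight, and the makespan is monotone in `s2`.
-/

/-- The feasible set of a chain of difference constraints with initial bound `c` and minimal gaps
`d`; it abstracts the start times on `M2`, where `d i` separates the consecutive jobs `i` and
`i + 1`. -/
def chainSolutions {M : Type*} [Add M] [LE M] {m : ℕ} (c : M) (d : Fin m → M) :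
    Set (Fin (m + 1) → M) :=
  {u | c ≤ u 0 ∧ ∀ i, u i.castSucc + d i ≤ u i.succ}

theorem isLeast_chainSolutions {M : Type*} [AddMonoid M] [Preorder M] [AddRightMono M] {m : ℕ}
    (c : M) (d : Fin m → M) :
    IsLeast (chainSolutions c d) fun j => c + Fin.partialSum d j := by
  refine ⟨⟨by simp, fun i => by simp only [Fin.partialSum_succ, add_assoc, le_refl]⟩, ?_⟩
  rintro u ⟨hu_zero, hu_succ⟩ j
  induction j using Fin.induction with
  | zero => simpa using hu_zero
  | succ i ih =>
    calc c + Fin.partialSum d i.succ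
        = c + Fin.partialSum d i.castSucc + d i := by rw [Fin.partialSum_succ, add_assoc]
      _ ≤ u i.castSucc + d i := by gcongr
      _ ≤ u i.succ := hu_succ i

theorem partialSum_last {M : Type*} [AddCommMonoid M] {m : ℕ} (d : Fin m → M) :
    Fin.partialSum d (Fin.last m) = ∑ i, d i := by
  rw [Fin.partialSum, Fin.val_last, List.take_of_length_le List.length_ofFn.le, List.sum_ofFn]

/-- The least delay between the `M2` starts of jobs `i` and `i + 1`: job `i` must leave `M2`, and
blocking keeps job `i + 1` off `M1` until job `i` starts on `M2`. -/
def startGap {m : ℕ} (a b : Fin (m + 1) → ℝ) (i : Fin m) : ℝ :=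
  max (a i.succ) (b i.castSucc)

theorem exists_blockingFeasible_iff {m : ℕ} {a b s2 : Fin (m + 1) → ℝ} :
    (∃ s1, BlockingFeasible (m + 1) (Nat.le_add_left 1 m) a b s1 s2) ↔
      s2 ∈ chainSolutions (a 0) (startGap a b) := by
  constructor
  · rintro ⟨s1, h_nonneg, h_start, h_succ, h_block⟩
    refine ⟨le_trans (le_add_of_nonneg_left h_nonneg) (h_start 0), fun i => ?_⟩
    have h_M1 : s2 i.castSucc + a i.succ ≤ s2 i.succ :=
      (add_le_add_left (h_block i.castSucc i.succ.isLt) _).trans (h_start i.succ)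
    have h_M2 : s2 i.castSucc + b i.castSucc ≤ s2 i.succ := h_succ i.castSucc i.succ.isLt
    rw [startGap, ← max_add_add_left]
    exact max_le h_M1 h_M2
  · rintro ⟨h_zero, h_gap⟩
    refine ⟨s2 - a, sub_nonneg.2 h_zero, fun j => (sub_add_cancel _ _).le, fun j h => ?_,
      fun j h => ?_⟩
    · let i : Fin m := ⟨j, Nat.lt_of_succ_lt_succ h⟩
      exact (add_le_add_right (le_max_right (a i.succ) (b i.castSucc)) _).trans (h_gap i)
    · let i : Fin m := ⟨j, Nat.lt_of_succ_lt_succ h⟩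
      exact le_sub_iff_add_le.2
        ((add_le_add_right (le_max_left (a i.succ) (b i.castSucc)) _).trans (h_gap i))

theorem makespan_mono {n : ℕ} (hn : 1 ≤ n) (b : Fin n → ℝ) : Monotone (makespan n hn b) :=
  fun _ _ h => add_le_add_left (h _) _

theorem setOf_makespan_eq_image {m : ℕ} (a b : Fin (m + 1) → ℝ) :
    {C : ℝ | ∃ s1 s2 : Fin (m + 1) → ℝ,
        BlockingFeasible (m + 1) (Nat.le_add_left 1 m) a b s1 s2 ∧
          makespan (m + 1) (Nat.le_add_left 1 m) b s2 = C} =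
      makespan (m + 1) (Nat.le_add_left 1 m) b '' chainSolutions (a 0) (startGap a b) := by
  ext C
  rw [Set.mem_ofPred_eq, exists_comm]
  simp only [exists_and_right, exists_blockingFeasible_iff, Set.mem_image]

theorem blocking_min_makespan_closedForm_general {m : ℕ} (a b : Fin (m + 1) → ℝ) :
    IsLeast {C : ℝ | ∃ s1 s2 : Fin (m + 1) → ℝ,
        BlockingFeasible (m + 1) (Nat.le_add_left 1 m) a b s1 s2 ∧
          makespan (m + 1) (Nat.le_add_left 1 m) b s2 = C}
      (a 0 + ∑ i : Fin m, max (a i.succ) (b i.castSucc) + b (Fin.last m)) := by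
  have h_least : IsLeast
      (makespan (m + 1) (Nat.le_add_left 1 m) b '' chainSolutions (a 0) (startGap a b))
      (a 0 + Fin.partialSum (startGap a b) (Fin.last m) + b (Fin.last m)) :=
    (makespan_mono _ b).map_isLeast (isLeast_chainSolutions (a 0) (startGap a b))
  rw [setOf_makespan_eq_image]
  rwa [partialSum_last] at h_least

/-- The minimum makespan of a two-machine blocking flow shop with fixed job
sequence is attained and equals
`a 0 + ∑_{j=1}^{n-1} max (a j) (b (j-1)) + b (n-1)`. -/
theorem blocking_min_makespan_closedForm
    (n : ℕ) (hn : 1 ≤ n) (a b : Fin n → ℝ)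
    (ha : ∀ j, 0 < a j) (hb : ∀ j, 0 < b j) :
    IsLeast {C : ℝ | ∃ s1 s2 : Fin n → ℝ,
        BlockingFeasible n hn a b s1 s2 ∧ makespan n hn b s2 = C}
      (a ⟨0, by omega⟩ +
        (∑ j : Fin (n - 1),
          max (a ⟨(j : ℕ) + 1, by have := j.isLt; omega⟩)
              (b ⟨(j : ℕ), by have := j.isLt; omega⟩)) +
        b ⟨n - 1, by omega⟩) := by
  obtain ⟨m, rfl⟩ := Nat.exists_eq_add_of_le' hn
  exact blocking_min_makespan_closedForm_general a b
end

section
/- Let n ≥ 1, let L be a nonempty finite type (the set of assignment modes), and let a j, b j : L → ℝ for j = 0,…,n−1. Define g : Fin n → L → ℝ recursively by g 0 l = a 0 l and g (j+1) l' = min over l ∈ L of ( g j l + max(a (j+1) l', b j l) ). Then min over l ∈ L of ( g (n−1) l + b (n−1) l ) equals min over tuples l : Fin n → L of [ a 0 (l 0) + (∑_{j=1}^{n−1} max(a j (l j), b (j−1) (l (j−1)))) + b (n−1) (l (n−1)) ]. (This is the correctness of the layered-graph shortest-path / dynamic-programming computation of the optimal assignment modes for the two-machine blocking flow shop with fixed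 job sequence.) -/
/-!
The first layer can be eliminated: a path through layers `0, …, m + 1` is its first vertex followed
by a path through layers `1, …, m + 1`, and minimizing over the first vertex turns the source cost
`s` into the source cost `l' ↦ min_l (s l + w 0 l l')` on layer `1`. By the recursion this is
`g 1`, so the remaining layers with `g 1, …, g (m + 1)` form an instance of the same problem.
-/

namespace LayeredGraph

open Finset

variable {m : ℕ} {M : Type*}

theorem inf'_add [LinearOrder M] [Add M] [AddRightMono M] {ι : Type*} (S : Finset ι) (f : ι → M)
    (c : M) (hS : S.Nonempty) : S.inf' hS f + c = S.inf' hS fun i => f i + c :=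
  map_finset_inf' (OrderHom.mk (· + c) add_left_mono) hS f

theorem inf'_univ_pi_succ [SemilatticeInf M] {L : Fin (m + 1) → Type*} [∀ j, Fintype (L j)]
    [∀ j, Nonempty (L j)] (f : (∀ j, L j) → M) :
    univ.inf' univ_nonempty f =
      univ.inf' univ_nonempty fun p : ∀ j : Fin m, L j.succ =>
        univ.inf' univ_nonempty fun x => f (Fin.cons x p) :=
  eq_of_forall_le_iff fun c => by
    simp only [le_inf'_iff, mem_univ, true_imp_iff, Fin.forall_fin_succ_pi]
    exact forall_comm

section Cost

variable [AddCommMonoid M]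

/-- The cost of the path `l` visiting one vertex per layer, for source costs `s`, arc costs `w`
and target costs `t`. Vertex types depend on the layer, and consecutive layers are completely
joined. -/
def pathCost {L : Fin (m + 1) → Type*} (s : L 0 → M)
    (w : ∀ j : Fin m, L j.castSucc → L j.succ → M) (t : L (Fin.last m) → M) (l : ∀ j, L j) : M :=
  s (l 0) + ∑ j, w j (l j.castSucc) (l j.succ) + t (l (Fin.last m))

theorem pathCost_cons {L : Fin (m + 2) → Type*} (s : L 0 → M)
    (w : ∀ j : Fin (m + 1), L j.castSucc → L j.succ → M) (t : L (Fin.last (m + 1)) → M)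
    (x : L 0) (p : ∀ j : Fin (m + 1), L j.succ) :
    pathCost s w t (Fin.cons x p) =
      pathCost (L := fun j => L j.succ) (fun y => s x + w 0 x y) (fun j => w j.succ) t p := by
  simp only [pathCost, Fin.sum_univ_succ, ← add_assoc]
  rfl

theorem inf'_pathCost [LinearOrder M] [IsOrderedAddMonoid M] {L : Fin (m + 1) → Type*}
    {ι : Type*} {S : Finset ι} (hS : S.Nonempty) (s : ι → L 0 → M)
    (w : ∀ j : Fin m, L j.castSucc → L j.succ → M) (t : L (Fin.last m) → M) (l : ∀ j, L j) :
    S.inf' hS (fun i => pathCost (s i) w t l) =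
      pathCost (fun y => S.inf' hS fun i => s i y) w t l := by
  simp only [pathCost, inf'_add]

end Cost

end LayeredGraph

open Finset LayeredGraph in
theorem dp_layered_graph_correct_general {m : ℕ} {M : Type*} [AddCommMonoid M] [LinearOrder M]
    [IsOrderedAddMonoid M] {L : Fin (m + 1) → Type*} [∀ j, Fintype (L j)] [∀ j, Nonempty (L j)]
    (s : L 0 → M) (w : ∀ j : Fin m, L j.castSucc → L j.succ → M) (t : L (Fin.last m) → M)
    (g : ∀ j, L j → M) (hg0 : ∀ l, g 0 l = s l)
    (hgs : ∀ j l', g j.succ l' =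
      univ.inf' univ_nonempty fun l => g j.castSucc l + w j l l') :
    univ.inf' univ_nonempty (fun l => g (Fin.last m) l + t l) =
      univ.inf' univ_nonempty (pathCost s w t) := by
  obtain rfl : g 0 = s := funext hg0
  induction m with
  | zero => simp [inf'_univ_pi_succ, pathCost]
  | succ m ih =>
    have first_layer : g 1 = fun y => univ.inf' univ_nonempty fun x => g 0 x + w 0 x y :=
      funext (hgs 0)
    calc
      _ = univ.inf' univ_nonempty (pathCost (L := fun j => L j.succ) (g 1) (fun j => w j.succ) t) :=
        ih (L := fun j => L j.succ) (fun j => w j.succ) t (fun j => g j.succ)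
          (fun j => hgs j.succ) (fun _ => rfl)
      _ = univ.inf' univ_nonempty fun p : ∀ j : Fin (m + 1), L j.succ =>
            univ.inf' univ_nonempty fun x => pathCost (g 0) w t (Fin.cons x p) := by
        simp only [pathCost_cons, inf'_pathCost, first_layer]
      _ = univ.inf' univ_nonempty (pathCost (g 0) w t) := (inf'_univ_pi_succ _).symm

/-- Correctness of the layered-graph shortest-path / dynamic-programming
computation of the optimal assignment modes for the two-machine blocking flow
shop with fixed job sequence: with `g` defined recursively by
`g 0 l = a 0 l` and `g (j+1) l' = min_{l} (g j l + max (a (j+1) l') (b j l))`,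
the value `min_{l} (g (n-1) l + b (n-1) l)` equals the minimum over all mode
tuples of the closed-form makespan. -/
theorem dp_layered_graph_correct
    {L : Type*} [Fintype L] [Nonempty L]
    (n : ℕ) (hn : 1 ≤ n) (a b : Fin n → L → ℝ)
    (g : Fin n → L → ℝ)
    (hg0 : ∀ l : L, g ⟨0, by omega⟩ l = a ⟨0, by omega⟩ l)
    (hgs : ∀ (j : Fin n) (h : (j : ℕ) + 1 < n) (l' : L),
      g ⟨(j : ℕ) + 1, h⟩ l' =
        Finset.univ.inf' Finset.univ_nonempty
          (fun l : L => g j l + max (a ⟨(j : ℕ) + 1, h⟩ l') (b j l))) :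
    Finset.univ.inf' Finset.univ_nonempty
        (fun l : L => g ⟨n - 1, by omega⟩ l + b ⟨n - 1, by omega⟩ l) =
    Finset.univ.inf' Finset.univ_nonempty
        (fun l : Fin n → L =>
          a ⟨0, by omega⟩ (l ⟨0, by omega⟩) +
          (∑ j : Fin (n - 1),
            max (a ⟨(j : ℕ) + 1, by have := j.isLt; omega⟩
                    (l ⟨(j : ℕ) + 1, by have := j.isLt; omega⟩))
                (b ⟨(j : ℕ), by have := j.isLt; omega⟩
                    (l ⟨(j : ℕ), by have := j.isLt; omega⟩))) +
          b ⟨n - 1, by omega⟩ (l ⟨n - 1, by omega⟩)) := by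
  obtain ⟨m, rfl⟩ := Nat.exists_eq_add_of_le' hn
  exact dp_layered_graph_correct_general (L := fun _ => L) (a 0)
    (fun j l l' => max (a j.succ l') (b j.castSucc l)) (b (Fin.last m)) g hg0
    fun j => hgs j.castSucc j.succ.isLt
end

section
/- Let m ≥ 1 and let n 1, …, n (m−1) be natural numbers. Then ∏_{k=1}^{m−1} (n k + 1) ≤ binom( (m−1) + ∑_{k=1}^{m−1} n k , m−1 ). (With q = m + ∑_k n k operations per job, this says the number of feasible assignment modes ∏_{k=1}^{m−1}(n k + 1) is at most binom(q−1, m−1).) -/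
/-!
A choice of `k i` elements from each of several disjoint sets of sizes `a i` is determined by the
union of the chosen elements, so `∏ i, (a i).choose (k i) ≤ (∑ i, a i).choose (∑ i, k i)`; for two
sets the left-hand side is one term of Vandermonde's identity. The theorem is the case
`a i = n i + 1`, `k i = 1`.
-/

theorem choose_mul_choose_le_choose_add (a b k l : ℕ) :
    a.choose k * b.choose l ≤ (a + b).choose (k + l) := by
  rw [Nat.add_choose_eq]
  exact Finset.single_le_sum (f := fun ij : ℕ × ℕ ↦ a.choose ij.1 * b.choose ij.2) (a := (k, l))
    (fun _ _ ↦ Nat.zero_le _) (Finset.HasAntidiagonal.mem_antidiagonal.2 rfl)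

theorem prod_choose_le_choose_sum {ι : Type*} (s : Finset ι) (a k : ι → ℕ) :
    ∏ i ∈ s, (a i).choose (k i) ≤ (∑ i ∈ s, a i).choose (∑ i ∈ s, k i) := by
  induction s using Finset.cons_induction with
  | empty => simp
  | cons i s hi ih =>
    rw [Finset.prod_cons, Finset.sum_cons, Finset.sum_cons]
    calc (a i).choose (k i) * ∏ j ∈ s, (a j).choose (k j)
        ≤ (a i).choose (k i) * (∑ j ∈ s, a j).choose (∑ j ∈ s, k j) := by gcongr
      _ ≤ (a i + ∑ j ∈ s, a j).choose (k i + ∑ j ∈ s, k j) :=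
        choose_mul_choose_le_choose_add ..

/-- The number of feasible assignment modes `∏_{k=1}^{m-1} (n k + 1)` is at most
`binom ((m-1) + ∑_k n k, m-1)`, i.e. `binom (q - 1, m - 1)` where
`q = m + ∑_k n k` is the number of operations per job. -/
theorem card_assignment_modes_le_choose
    (m : ℕ) (hm : 1 ≤ m) (n : Fin (m - 1) → ℕ) :
    (∏ k : Fin (m - 1), (n k + 1)) ≤
      Nat.choose ((m - 1) + ∑ k : Fin (m - 1), n k) (m - 1) := by
  calc ∏ k, (n k + 1) = ∏ k, (n k + 1).choose 1 := by simp only [Nat.choose_one_right]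
    _ ≤ (∑ k, (n k + 1)).choose (∑ _k : Fin (m - 1), 1) := prod_choose_le_choose_sum ..
    _ = ((m - 1) + ∑ k, n k).choose (m - 1) := by
      rw [Finset.sum_add_distrib, Fin.sum_const, smul_eq_mul, mul_one, add_comm]
end

section
/- Consider an m-machine blocking flow shop with exactly two jobs processed in the fixed order: job 0 before job 1 on every machine, with strictly positive processing times P i k > 0 for job i ∈ {0,1} on machine k ∈ {0,…,m−1}. Then the minimum makespan over all blocking-feasible schedules equals the minimum makespan over all non-blocking-feasible schedules; i.e., with two jobs, the blocking constraint does not change the optimal makespan. -/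
/-- Feasible schedule (without the blocking constraint) for an `m`-machine flow
shop with fixed job sequence: `s j k` is the start time of job `j` on machine `k`. -/
def FlowFeasible (n m : ℕ) (hn : 1 ≤ n) (hm : 1 ≤ m)
    (P : Fin n → Fin m → ℝ) (s : Fin n → Fin m → ℝ) : Prop :=
  (∀ (j : Fin n) (k : Fin m), 0 ≤ s j k) ∧
  (∀ (j : Fin n) (k : Fin m), (h : (k : ℕ) + 1 < m) →
    s j k + P j k ≤ s j ⟨(k : ℕ) + 1, h⟩) ∧
  (∀ (j : Fin n), (h : (j : ℕ) + 1 < n) → ∀ k : Fin m,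
    s j k + P j k ≤ s ⟨(j : ℕ) + 1, h⟩ k)

/-- Blocking-feasible schedule: feasible, and moreover job `j` occupies machine
`k` until it starts on machine `k + 1`. -/
def FlowBlockingFeasible (n m : ℕ) (hn : 1 ≤ n) (hm : 1 ≤ m)
    (P : Fin n → Fin m → ℝ) (s : Fin n → Fin m → ℝ) : Prop :=
  FlowFeasible n m hn hm P s ∧
  (∀ (j : Fin n), (h : (j : ℕ) + 1 < n) → ∀ (k : Fin m), (h' : (k : ℕ) + 1 < m) →
    s j ⟨(k : ℕ) + 1, h'⟩ ≤ s ⟨(j : ℕ) + 1, h⟩ k)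

/-- Makespan: completion time of the last job on the last machine. -/
def flowMakespan (n m : ℕ) (hn : 1 ≤ n) (hm : 1 ≤ m)
    (P : Fin n → Fin m → ℝ) (s : Fin n → Fin m → ℝ) : ℝ :=
  s ⟨n - 1, by omega⟩ ⟨m - 1, by omega⟩ + P ⟨n - 1, by omega⟩ ⟨m - 1, by omega⟩

/-!
Moving job 0 to its no-wait schedule starting at time 0 only starts its operations earlier, so job 1
can stay where it is. Job 0 then leaves each machine upon completion, so the blocking constraint
reduces to the capacity constraint, and the two problems have the same attainable makespans. The
minimum is attained because all constraints are bounds `0 ≤ s a` or difference constraints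
`s a + c ≤ s b`, which are stable under pointwise infima.
-/

section Schedules

variable {n m : ℕ}

theorem exists_flowFeasible (hn : 1 ≤ n) (hm : 1 ≤ m) (P : Fin n → Fin m → ℝ) :
    ∃ s, FlowFeasible n m hn hm P s := by
  have le_norm (j : Fin n) (k : Fin m) : P j k ≤ ‖P‖ := calc
    P j k ≤ ‖P j k‖ := le_abs_self _
    _ ≤ ‖P j‖ := norm_le_pi_norm (P j) k
    _ ≤ ‖P‖ := norm_le_pi_norm P j
  refine ⟨fun j k => ((j : ℝ) + k) * ‖P‖, fun j k => by positivity, fun j k _ => ?_,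
    fun j _ k => ?_⟩
  all_goals
    push_cast
    linarith [le_norm j k]

theorem exists_isLeast_flowFeasible (hn : 1 ≤ n) (hm : 1 ≤ m) (P : Fin n → Fin m → ℝ) :
    ∃ s, IsLeast {s | FlowFeasible n m hn hm P s} s := by
  let S := {s // FlowFeasible n m hn hm P s}
  have : Nonempty S := nonempty_subtype.mpr (exists_flowFeasible hn hm P)
  have iInf_le (t : S) (j : Fin n) (k : Fin m) : ⨅ s : S, s.1 j k ≤ t.1 j k :=
    ciInf_le ⟨0, Set.forall_mem_range.mpr fun s : S => s.2.1 j k⟩ t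
  refine ⟨fun j k => ⨅ s : S, s.1 j k, ⟨fun j k => ?_, fun j k h => ?_, fun j h k => ?_⟩, ?_⟩
  · exact le_ciInf fun t => t.2.1 j k
  · exact le_ciInf fun t => (add_le_add_left (iInf_le t j k) _).trans (t.2.2.1 j k h)
  · exact le_ciInf fun t => (add_le_add_left (iInf_le t j k) _).trans (t.2.2.2 j h k)
  · exact fun t ht j k => iInf_le ⟨t, ht⟩ j k

theorem flowMakespan_mono (hn : 1 ≤ n) (hm : 1 ≤ m) (P : Fin n → Fin m → ℝ) :
    Monotone (flowMakespan n m hn hm P) :=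
  fun _ _ hst => add_le_add_left (hst _ _) _

/-- The head of an operation in scheduling terminology: the total time `p` of the same job on the
machines before `k`, i.e. the start time on `k` of a job released at time `0` that never waits. -/
def headTime (p : Fin m → ℝ) (k : Fin m) : ℝ := ∑ l ∈ Finset.Iio k, p l

theorem headTime_nonneg {p : Fin m → ℝ} (hp : ∀ k, 0 ≤ p k) (k : Fin m) : 0 ≤ headTime p k :=
  Finset.sum_nonneg fun l _ => hp l

theorem headTime_succ (p : Fin m → ℝ) (k : Fin m) (h : (k : ℕ) + 1 < m) :
    headTime p ⟨k + 1, h⟩ = headTime p k + p k := by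
  have Iio_succ : Finset.Iio (⟨k + 1, h⟩ : Fin m) = Finset.Iic k := by
    ext l
    simp only [Finset.mem_Iio, Finset.mem_Iic, Fin.lt_def, Fin.le_def, Nat.lt_succ_iff]
  rw [headTime, Iio_succ, ← Finset.sum_Iio_add_eq_sum_Iic, headTime]

theorem FlowFeasible.headTime_le {hn : 1 ≤ n} {hm : 1 ≤ m} {P s : Fin n → Fin m → ℝ}
    (hs : FlowFeasible n m hn hm P s) (j : Fin n) (k : Fin m) : headTime (P j) k ≤ s j k := by
  obtain ⟨nonneg, machine_step, -⟩ := hs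
  obtain ⟨k, hk⟩ := k
  induction k with
  | zero =>
    have Iio_zero : Finset.Iio (⟨0, hk⟩ : Fin m) = ∅ := by
      ext l
      simp [Fin.lt_def]
    rw [headTime, Iio_zero, Finset.sum_empty]
    exact nonneg j ⟨0, hk⟩
  | succ k ih =>
    calc headTime (P j) ⟨k + 1, hk⟩
      _ = headTime (P j) ⟨k, by omega⟩ + P j ⟨k, by omega⟩ := headTime_succ (P j) ⟨k, by omega⟩ hk
      _ ≤ s j ⟨k, by omega⟩ + P j ⟨k, by omega⟩ := add_le_add_left (ih _) _
      _ ≤ s j ⟨k + 1, hk⟩ := machine_step j ⟨k, by omega⟩ hk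

end Schedules

section TwoJobs

variable {m : ℕ} {hm : 1 ≤ m} {P : Fin 2 → Fin m → ℝ}

theorem FlowFeasible.flowBlockingFeasible_headTime (hP : ∀ k, 0 ≤ P 0 k)
    {s : Fin 2 → Fin m → ℝ} (hs : FlowFeasible 2 m one_le_two hm P s) :
    FlowBlockingFeasible 2 m one_le_two hm P ![headTime (P 0), s 1] := by
  have capacity (k : Fin m) : headTime (P 0) k + P 0 k ≤ s 1 k :=
    (add_le_add_left (hs.headTime_le 0 k) _).trans (hs.2.2 0 one_lt_two k)
  refine ⟨⟨Fin.forall_fin_two.mpr ⟨headTime_nonneg hP, hs.1 1⟩,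
    Fin.forall_fin_two.mpr ⟨fun k h => (headTime_succ (P 0) k h).ge, hs.2.1 1⟩, ?_⟩, ?_⟩
  · intro j h k
    obtain rfl : j = 0 := by omega
    exact capacity k
  · intro j h k hk
    obtain rfl : j = 0 := by omega
    exact (headTime_succ (P 0) k hk).trans_le (capacity k)

theorem flowMakespan_image_flowBlockingFeasible (hP : ∀ k, 0 ≤ P 0 k) :
    flowMakespan 2 m one_le_two hm P '' {s | FlowBlockingFeasible 2 m one_le_two hm P s} =
      flowMakespan 2 m one_le_two hm P '' {s | FlowFeasible 2 m one_le_two hm P s} := by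
  refine (Set.image_mono fun s hs => hs.1).antisymm ?_
  rintro _ ⟨s, hs, rfl⟩
  exact ⟨_, hs.flowBlockingFeasible_headTime hP, rfl⟩

end TwoJobs

/-- With only two jobs, the blocking constraint is irrelevant: the minimum
makespan over all blocking-feasible schedules is attained and equals the
minimum makespan over all (non-blocking) feasible schedules. -/
theorem two_jobs_blocking_eq_nonblocking
    (m : ℕ) (hm : 1 ≤ m) (P : Fin 2 → Fin m → ℝ)
    (hP : ∀ j k, 0 < P j k) :
    ∃ C : ℝ,
      IsLeast {C : ℝ | ∃ s : Fin 2 → Fin m → ℝ,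
          FlowBlockingFeasible 2 m (by omega) hm P s ∧
          flowMakespan 2 m (by omega) hm P s = C} C ∧
      IsLeast {C : ℝ | ∃ s : Fin 2 → Fin m → ℝ,
          FlowFeasible 2 m (by omega) hm P s ∧
          flowMakespan 2 m (by omega) hm P s = C} C := by
  obtain ⟨s, hs⟩ := exists_isLeast_flowFeasible one_le_two hm P
  have least_feasible := (flowMakespan_mono one_le_two hm P).map_isLeast hs
  have least_blocking := least_feasible
  rw [← flowMakespan_image_flowBlockingFeasible fun k => (hP 0 k).le] at least_blocking
  exact ⟨_, least_blocking, least_feasible⟩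
end

section
/- There exist a number of jobs n and strictly positive processing times P j k > 0 for jobs j = 0,…,n−1 on m = 3 machines such that the minimum makespan over all blocking-feasible schedules is strictly smaller than the minimum makespan over all no-wait schedules. Consequently, the property that some optimal blocking schedule has every job's completion time on each machine equal to its starting time on the next machine (which holds for m = 2) fails for m ≥ 3 machines. -/
/-- No-wait schedule: each job starts on machine `k + 1` exactly when it
finishes on machine `k`. -/
def FlowNoWait (n m : ℕ)
    (P : Fin n → Fin m → ℝ) (s : Fin n → Fin m → ℝ) : Prop :=
  ∀ (j : Fin n) (k : Fin m), (h : (k : ℕ) + 1 < m) →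
    s j ⟨(k : ℕ) + 1, h⟩ = s j k + P j k

/-!
Give three jobs unit processing times on every machine, except that the first job needs `x` extra
time on the last machine and the last job needs `x` extra time on the first machine. With
blocking, the middle job can leave the first machine at once and wait in front of the last one, so
the two delays overlap and cost `x` in total. Without waiting, the middle job starts late enough to
find the last machine free, so the two delays add up to `2 * x`.
-/

open Finset

/-- The set of makespans of blocking-feasible schedules, whose least element is the optimal
blocking makespan. -/
def blockingMakespans (n m : ℕ) (hn : 1 ≤ n) (hm : 1 ≤ m) (P : Fin n → Fin m → ℝ) : Set ℝ :=
  {C | ∃ s, FlowBlockingFeasible n m hn hm P s ∧ flowMakespan n m hn hm P s = C}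

/-- The set of makespans of no-wait schedules, whose least element is the optimal no-wait
makespan. -/
def noWaitMakespans (n m : ℕ) (hn : 1 ≤ n) (hm : 1 ≤ m) (P : Fin n → Fin m → ℝ) : Set ℝ :=
  {C | ∃ s, FlowBlockingFeasible n m hn hm P s ∧ FlowNoWait n m P s ∧
    flowMakespan n m hn hm P s = C}

theorem flowBlockingFeasible_iff_castSucc_succ {n m : ℕ} {P s : Fin (n + 1) → Fin (m + 1) → ℝ} :
    FlowBlockingFeasible (n + 1) (m + 1) (by lia) (by lia) P s ↔
      (∀ j k, 0 ≤ s j k) ∧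
      (∀ j (k : Fin m), s j k.castSucc + P j k.castSucc ≤ s j k.succ) ∧
      (∀ (j : Fin n) k, s j.castSucc k + P j.castSucc k ≤ s j.succ k) ∧
      ∀ (j : Fin n) (k : Fin m), s j.castSucc k.succ ≤ s j.succ k.castSucc := by
  constructor
  · rintro ⟨⟨nonneg, route, sequence⟩, blocking⟩
    exact ⟨nonneg, fun j k ↦ route j k.castSucc (by simp),
      fun j k ↦ sequence j.castSucc (by simp) k,
      fun j k ↦ blocking j.castSucc (by simp) k.castSucc (by simp)⟩
  · rintro ⟨nonneg, route, sequence, blocking⟩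
    exact ⟨⟨nonneg, fun j k hk ↦ route j ⟨k, by lia⟩, fun j hj k ↦ sequence ⟨j, by lia⟩ k⟩,
      fun j hj k hk ↦ blocking ⟨j, by lia⟩ ⟨k, by lia⟩⟩

theorem flowNoWait_iff_castSucc_succ {n m : ℕ} {P s : Fin n → Fin (m + 1) → ℝ} :
    FlowNoWait n (m + 1) P s ↔
      ∀ j (k : Fin m), s j k.succ = s j k.castSucc + P j k.castSucc :=
  ⟨fun h j k ↦ h j k.castSucc (by simp), fun h j k hk ↦ h j ⟨k, by lia⟩⟩

theorem sum_Iio_fin_succ {M : Type*} [AddCommMonoid M] {m : ℕ} (f : Fin (m + 1) → M) (k : Fin m) :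
    ∑ i ∈ Iio k.succ, f i = ∑ i ∈ Iio k.castSucc, f i + f k.castSucc := by
  have Iio_succ : Iio k.succ = Iic k.castSucc := by
    ext i
    simp [Fin.le_castSucc_iff]
  rw [Iio_succ, sum_Iio_add_eq_sum_Iic]

theorem FlowFeasible.start_zero_add_sum_Iio_le {n m : ℕ} {hn : 1 ≤ n} {hm : 1 ≤ m + 1}
    {P s : Fin n → Fin (m + 1) → ℝ} (h : FlowFeasible n (m + 1) hn hm P s) (j : Fin n)
    (k : Fin (m + 1)) :
    s j 0 + ∑ i ∈ Iio k, P j i ≤ s j k := by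
  induction k using Fin.induction with
  | zero => simp [← bot_eq_zero]
  | succ k ih =>
    have step : s j k.castSucc + P j k.castSucc ≤ s j k.succ := h.2.1 j k.castSucc (by simp)
    rw [sum_Iio_fin_succ]
    linarith

theorem FlowNoWait.start_eq {n m : ℕ} {P s : Fin n → Fin (m + 1) → ℝ}
    (h : FlowNoWait n (m + 1) P s) (j : Fin n) (k : Fin (m + 1)) :
    s j k = s j 0 + ∑ i ∈ Iio k, P j i := by
  induction k using Fin.induction with
  | zero => simp [← bot_eq_zero]
  | succ k ih =>
    have step : s j k.succ = s j k.castSucc + P j k.castSucc := h j k.castSucc (by simp)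
    rw [sum_Iio_fin_succ]
    linarith

theorem FlowNoWait.start_zero_add_sum_Iic_le {n m : ℕ} {P s : Fin (n + 1) → Fin (m + 1) → ℝ}
    (hw : FlowNoWait (n + 1) (m + 1) P s)
    (h : FlowFeasible (n + 1) (m + 1) (by lia) (by lia) P s) (j : Fin n) (k : Fin (m + 1)) :
    s j.castSucc 0 + ∑ i ∈ Iic k, P j.castSucc i ≤ s j.succ 0 + ∑ i ∈ Iio k, P j.succ i :=
  calc
    s j.castSucc 0 + ∑ i ∈ Iic k, P j.castSucc i = s j.castSucc k + P j.castSucc k := by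
      rw [hw.start_eq _ k, add_assoc, sum_Iio_add_eq_sum_Iic]
    _ ≤ s j.succ k := h.2.2 j.castSucc (by simp) k
    _ = s j.succ 0 + ∑ i ∈ Iio k, P j.succ i := hw.start_eq _ _

-- Job `j + 1` frees machine `k` only by entering machine `k + 1`, which job `j` has then completed.
theorem FlowBlockingFeasible.completion_le_start_succ_succ {n m : ℕ}
    {P s : Fin (n + 2) → Fin (m + 1) → ℝ}
    (h : FlowBlockingFeasible (n + 2) (m + 1) (by lia) (by lia) P s) (j : Fin n) (k : Fin m) :
    s j.castSucc.castSucc k.succ + P j.castSucc.castSucc k.succ ≤ s j.succ.succ k.castSucc := by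
  obtain ⟨-, -, sequence, blocking⟩ := flowBlockingFeasible_iff_castSucc_succ.1 h
  exact (sequence j.castSucc k.succ).trans (blocking j.succ k)

theorem flowMakespan_eq_last {n m : ℕ} (P s : Fin (n + 1) → Fin (m + 1) → ℝ) :
    flowMakespan (n + 1) (m + 1) (by lia) (by lia) P s =
      s (Fin.last n) (Fin.last m) + P (Fin.last n) (Fin.last m) :=
  rfl

theorem FlowFeasible.start_zero_add_sum_le_flowMakespan {n m : ℕ}
    {P s : Fin (n + 1) → Fin (m + 1) → ℝ}
    (h : FlowFeasible (n + 1) (m + 1) (by lia) (by lia) P s) :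
    s (Fin.last n) 0 + ∑ k, P (Fin.last n) k ≤
      flowMakespan (n + 1) (m + 1) (by lia) (by lia) P s := by
  have last_start := h.start_zero_add_sum_Iio_le (Fin.last n) (Fin.last m)
  rw [flowMakespan_eq_last, ← Iic_top, ← sum_Iio_add_eq_sum_Iic, Fin.top_eq_last]
  linarith

/-- The processing times of three jobs on `m + 1` machines that are all equal to `1`, except for an
additional delay `x` of the first job on the last machine and of the last job on the first
machine. -/
def delayedTimes (m : ℕ) (x : ℝ) : Fin 3 → Fin (m + 1) → ℝ
  | 0, k => 1 + if k = Fin.last m then x else 0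
  | 1, _ => 1
  | 2, k => 1 + if k = 0 then x else 0

theorem delayedTimes_pos (m : ℕ) {x : ℝ} (hx : 0 ≤ x) (j : Fin 3) (k : Fin (m + 1)) :
    0 < delayedTimes m x j k := by
  fin_cases j <;> grind [delayedTimes]

theorem sum_delayedTimes_zero (m : ℕ) (x : ℝ) : ∑ k, delayedTimes m x 0 k = m + 1 + x := by
  simp [delayedTimes, sum_add_distrib]

theorem sum_delayedTimes_two (m : ℕ) (x : ℝ) : ∑ k, delayedTimes m x 2 k = m + 1 + x := by
  simp [delayedTimes, sum_add_distrib]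

/-- The blocking schedule for `delayedTimes m x` in which the middle job waits for the last
machine, holding the machine before it, while the last job is being delayed on the first one. -/
def overlappingSchedule (m : ℕ) (x : ℝ) : Fin 3 → Fin (m + 1) → ℝ
  | 0, k => (k : ℕ)
  | 1, k => (k : ℕ) + 1 + if k = Fin.last m then x else 0
  | 2, k => (k : ℕ) + 2 + if k = 0 then 0 else x

/-- The no-wait schedule for `delayedTimes m x` in which every job starts as early as possible. -/
def noWaitSchedule (m : ℕ) (x : ℝ) : Fin 3 → Fin (m + 1) → ℝ
  | 0, k => (k : ℕ)
  | 1, k => (k : ℕ) + 1 + x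
  | 2, k => (k : ℕ) + 2 + x + if k = 0 then 0 else x

theorem flowBlockingFeasible_overlappingSchedule (m : ℕ) {x : ℝ} (hx : 0 ≤ x) :
    FlowBlockingFeasible 3 (m + 3) (by lia) (by lia) (delayedTimes (m + 2) x)
      (overlappingSchedule (m + 2) x) := by
  have val_succ (k : Fin (m + 2)) : ((k.succ : ℕ) : ℝ) = (k.castSucc : ℕ) + 1 := by simp
  refine flowBlockingFeasible_iff_castSucc_succ.2
    ⟨fun j k ↦ ?_, fun j k ↦ ?_, fun j k ↦ ?_, fun j k ↦ ?_⟩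
  · fin_cases j <;> grind [overlappingSchedule]
  · fin_cases j <;> grind [delayedTimes, overlappingSchedule]
  · fin_cases j <;> grind [delayedTimes, overlappingSchedule]
  · fin_cases j <;> grind [overlappingSchedule]

theorem flowNoWait_noWaitSchedule (m : ℕ) (x : ℝ) :
    FlowNoWait 3 (m + 1) (delayedTimes m x) (noWaitSchedule m x) := by
  have val_succ (k : Fin m) : ((k.succ : ℕ) : ℝ) = (k.castSucc : ℕ) + 1 := by simp
  refine flowNoWait_iff_castSucc_succ.2 fun j k ↦ ?_
  fin_cases j <;> grind [delayedTimes, noWaitSchedule]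

theorem flowBlockingFeasible_noWaitSchedule (m : ℕ) {x : ℝ} (hx : 0 ≤ x) :
    FlowBlockingFeasible 3 (m + 1) (by lia) (by lia) (delayedTimes m x) (noWaitSchedule m x) := by
  have val_succ (k : Fin m) : ((k.succ : ℕ) : ℝ) = (k.castSucc : ℕ) + 1 := by simp
  have no_wait := flowNoWait_iff_castSucc_succ.1 (flowNoWait_noWaitSchedule m x)
  refine flowBlockingFeasible_iff_castSucc_succ.2
    ⟨fun j k ↦ ?_, fun j k ↦ (no_wait j k).ge, fun j k ↦ ?_, fun j k ↦ ?_⟩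
  · fin_cases j <;> grind [noWaitSchedule]
  · fin_cases j <;> grind [delayedTimes, noWaitSchedule]
  · fin_cases j <;> grind [noWaitSchedule]

theorem flowMakespan_overlappingSchedule (m : ℕ) (x : ℝ) :
    flowMakespan 3 (m + 2) (by lia) (by lia) (delayedTimes (m + 1) x)
      (overlappingSchedule (m + 1) x) = m + 4 + x := by
  have val_last : ((Fin.last (m + 1) : ℕ) : ℝ) = m + 1 := by simp
  simp only [flowMakespan_eq_last, Fin.reduceLast]
  grind [delayedTimes, overlappingSchedule]

theorem flowMakespan_noWaitSchedule (m : ℕ) (x : ℝ) :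
    flowMakespan 3 (m + 1) (by lia) (by lia) (delayedTimes m x) (noWaitSchedule m x) =
      m + 3 + 2 * x := by
  simp only [flowMakespan_eq_last, Fin.reduceLast]
  grind [delayedTimes, noWaitSchedule]

theorem FlowBlockingFeasible.le_flowMakespan_delayedTimes {m : ℕ} {x : ℝ}
    {s : Fin 3 → Fin (m + 3) → ℝ}
    (h : FlowBlockingFeasible 3 (m + 3) (by lia) (by lia) (delayedTimes (m + 2) x) s) :
    m + 5 + x ≤ flowMakespan 3 (m + 3) (by lia) (by lia) (delayedTimes (m + 2) x) s := by
  obtain ⟨nonneg, route, -, -⟩ := flowBlockingFeasible_iff_castSucc_succ.1 h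
  have first_job : m + 2 ≤ s 0 (Fin.last (m + 2)) := by
    have reach_last : s 0 0 + (m + 2) ≤ s 0 (Fin.last (m + 2)) := by
      simpa [delayedTimes] using h.1.start_zero_add_sum_Iio_le 0 (Fin.last (m + 2))
    linarith [nonneg 0 0]
  have handover : s 0 (Fin.last (m + 2)) + (1 + x) ≤ s 2 (Fin.last (m + 1)).castSucc := by
    simpa [delayedTimes] using h.completion_le_start_succ_succ 0 (Fin.last (m + 1))
  have last_job : s 2 (Fin.last (m + 1)).castSucc + 1 ≤ s 2 (Fin.last (m + 2)) := by
    simpa [delayedTimes] using route 2 (Fin.last (m + 1))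
  have makespan_eq : flowMakespan 3 (m + 3) (by lia) (by lia) (delayedTimes (m + 2) x) s =
      s 2 (Fin.last (m + 2)) + 1 := by
    simp [flowMakespan_eq_last, delayedTimes]
  linarith

theorem FlowNoWait.le_flowMakespan_delayedTimes {m : ℕ} {x : ℝ} {s : Fin 3 → Fin (m + 1) → ℝ}
    (hw : FlowNoWait 3 (m + 1) (delayedTimes m x) s)
    (h : FlowFeasible 3 (m + 1) (by lia) (by lia) (delayedTimes m x) s) :
    m + 3 + 2 * x ≤ flowMakespan 3 (m + 1) (by lia) (by lia) (delayedTimes m x) s := by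
  have middle_job : 1 + x ≤ s 1 0 := by
    have Iic_last : Iic (Fin.last m) = univ := Iic_top
    have last_machine_free : s 0 0 + ∑ k, delayedTimes m x 0 k ≤ s 1 0 + m := by
      simpa [Iic_last, delayedTimes] using hw.start_zero_add_sum_Iic_le h 0 (Fin.last m)
    rw [sum_delayedTimes_zero] at last_machine_free
    linarith [h.1 0 0]
  have last_job : s 1 0 + 1 ≤ s 2 0 := h.2.2 1 (by simp) 0
  have last_job_total : s 2 0 + ∑ k, delayedTimes m x 2 k ≤
      flowMakespan 3 (m + 1) (by lia) (by lia) (delayedTimes m x) s :=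
    h.start_zero_add_sum_le_flowMakespan
  rw [sum_delayedTimes_two] at last_job_total
  linarith

theorem isLeast_blockingMakespans_delayedTimes (m : ℕ) {x : ℝ} (hx : 0 ≤ x) :
    IsLeast (blockingMakespans 3 (m + 3) (by lia) (by lia) (delayedTimes (m + 2) x))
      (m + 5 + x) := by
  refine ⟨⟨_, flowBlockingFeasible_overlappingSchedule m hx, ?_⟩, ?_⟩
  · rw [flowMakespan_overlappingSchedule]
    push_cast
    ring
  · rintro _ ⟨s, hs, rfl⟩
    exact hs.le_flowMakespan_delayedTimes

theorem isLeast_noWaitMakespans_delayedTimes (m : ℕ) {x : ℝ} (hx : 0 ≤ x) :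
    IsLeast (noWaitMakespans 3 (m + 1) (by lia) (by lia) (delayedTimes m x)) (m + 3 + 2 * x) := by
  refine ⟨⟨_, flowBlockingFeasible_noWaitSchedule m hx, flowNoWait_noWaitSchedule m x,
    flowMakespan_noWaitSchedule m x⟩, ?_⟩
  rintro _ ⟨s, hs, hw, rfl⟩
  exact hw.le_flowMakespan_delayedTimes hs.1

theorem blocking_lt_noWait_three_machines_general (m : ℕ) (hm : 3 ≤ m) :
    ∃ (n : ℕ) (hn : 1 ≤ n) (P : Fin n → Fin m → ℝ),
      (∀ j k, 0 < P j k) ∧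
      ∃ Cb Cnw : ℝ,
        IsLeast (blockingMakespans n m hn (by lia) P) Cb ∧
        IsLeast (noWaitMakespans n m hn (by lia) P) Cnw ∧
        Cb < Cnw := by
  obtain ⟨m, rfl⟩ := Nat.exists_eq_add_of_le' hm
  refine ⟨3, by lia, delayedTimes (m + 2) 1, delayedTimes_pos _ zero_le_one, _, _,
    isLeast_blockingMakespans_delayedTimes m zero_le_one,
    isLeast_noWaitMakespans_delayedTimes (m + 2) zero_le_one, ?_⟩
  push_cast
  linarith

/-- For `m = 3` machines there is an instance where the optimal blocking
makespan is strictly smaller than the optimal no-wait makespan; hence for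
`m ≥ 3` no optimal blocking schedule need be no-wait (unlike the `m = 2` case). -/
theorem blocking_lt_noWait_three_machines :
    ∃ (n : ℕ) (hn : 1 ≤ n) (P : Fin n → Fin 3 → ℝ),
      (∀ j k, 0 < P j k) ∧
      ∃ Cb Cnw : ℝ,
        IsLeast {C : ℝ | ∃ s : Fin n → Fin 3 → ℝ,
            FlowBlockingFeasible n 3 hn (by omega) P s ∧
            flowMakespan n 3 hn (by omega) P s = C} Cb ∧
        IsLeast {C : ℝ | ∃ s : Fin n → Fin 3 → ℝ,
            FlowBlockingFeasible n 3 hn (by omega) P s ∧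
            FlowNoWait n 3 P s ∧
            flowMakespan n 3 hn (by omega) P s = C} Cnw ∧
        Cb < Cnw :=
  blocking_lt_noWait_three_machines_general 3 le_rfl
end
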